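/- Let G be a connected simple graph on a finite vertex set V with |V| = n ≥ 2, with Laplacian matrix L, all-ones matrix J, and L† = (L + (1/n)J)⁻¹ − (1/n)J. For any two distinct vertices s, t with degrees d_s, d_t and b_st = e_s − e_t, the effective resistance satisfies R_eff(s,t) = b_stᵀ L† b_st ≥ (1/2)·(1/d_s + 1/d_t). -/

import Mathlib

open Matrix

/-- The `n × n` all-ones matrix `J`. -/
def allOnes (V : Type*) [Fintype V] : Matrix V V ℝ := Matrix.of fun _ _ => 1

/-- The Moore–Penrose pseudoinverse of the Laplacian of `G`,
`L† = (L + (1/n)·J)⁻¹ - (1/n)·J`. -/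
noncomputable def lapPinv {V : Type*} [Fintype V] [DecidableEq V]
    (G : SimpleGraph V) [DecidableRel G.Adj] : Matrix V V ℝ :=
  (G.lapMatrix ℝ + ((Fintype.card V : ℝ))⁻¹ • allOnes V)⁻¹
    - ((Fintype.card V : ℝ))⁻¹ • allOnes V

/-- The vector `b_st = e_s - e_t`. -/
def bvec {V : Type*} [DecidableEq V] (s t : V) : V → ℝ :=
  Pi.single s 1 - Pi.single t 1

/-!
The potential `y = L† b` of a demand `b` with zero sum solves `L y = b`, so completing the square in
the energy form of `L` gives `2 xᵀ b - xᵀ L x ≤ bᵀ L† b` for every test potential `x`. Since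
`(u - v)² ≤ 2 u² + 2 v²` on each edge, `xᵀ L x ≤ 2 xᵀ D x`, and the optimal test potential for this
weaker energy, `x = D⁻¹ b / 2`, yields `bᵀ D⁻¹ b / 2 ≤ bᵀ L† b`.
-/

section Energy

variable {V : Type*} [Fintype V]

lemma two_mul_dotProduct_mulVec_sub_le {R : Type*} [CommRing R] [PartialOrder R]
    [IsOrderedAddMonoid R] [StarRing R] [TrivialStar R] {A : Matrix V V R} (hA : A.PosSemidef)
    (x y : V → R) :
    2 * (x ⬝ᵥ A *ᵥ y) - x ⬝ᵥ A *ᵥ x ≤ y ⬝ᵥ A *ᵥ y := by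
  have symm : y ⬝ᵥ A *ᵥ x = x ⬝ᵥ A *ᵥ y := by
    have hAT : Aᵀ = A := by simpa [conjTranspose_eq_transpose_of_trivial] using hA.isHermitian.eq
    rw [dotProduct_mulVec, ← mulVec_transpose, hAT, dotProduct_comm]
  have expand : (y - x) ⬝ᵥ A *ᵥ (y - x) =
      y ⬝ᵥ A *ᵥ y - (2 * (x ⬝ᵥ A *ᵥ y) - x ⬝ᵥ A *ᵥ x) := by
    rw [mulVec_sub, sub_dotProduct, dotProduct_sub, dotProduct_sub, symm]
    ring
  have nonneg := hA.dotProduct_mulVec_nonneg (y - x)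
  rwa [star_trivial, expand, sub_nonneg] at nonneg

lemma dotProduct_lapMatrix_mulVec_le_two_mul_degMatrix {R : Type*} [Field R] [LinearOrder R]
    [IsStrictOrderedRing R] [DecidableEq V] (G : SimpleGraph V) [DecidableRel G.Adj] (x : V → R) :
    x ⬝ᵥ G.lapMatrix R *ᵥ x ≤ 2 * (x ⬝ᵥ G.degMatrix R *ᵥ x) := by
  have sum_left : ∑ u, ∑ v, (if G.Adj u v then x u ^ 2 else 0) = x ⬝ᵥ G.degMatrix R *ᵥ x := by
    rw [G.dotProduct_mulVec_degMatrix]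
    simp only [G.degree_eq_sum_if_adj, Finset.sum_mul, ite_mul, one_mul, zero_mul, sq]
  have sum_right : ∑ u, ∑ v, (if G.Adj u v then x v ^ 2 else 0) = x ⬝ᵥ G.degMatrix R *ᵥ x := by
    rw [Finset.sum_comm, ← sum_left]
    simp only [G.adj_comm]
  have edge_le (u v : V) : (if G.Adj u v then (x u - x v) ^ 2 else 0) ≤
      2 * ((if G.Adj u v then x u ^ 2 else 0) + (if G.Adj u v then x v ^ 2 else 0)) := by
    split_ifs
    · linarith [sq_nonneg (x u + x v)]
    · simp
  calc x ⬝ᵥ G.lapMatrix R *ᵥ x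
      = (∑ u, ∑ v, if G.Adj u v then (x u - x v) ^ 2 else 0) / 2 := by
        rw [← toLinearMap₂'_apply', G.lapMatrix_toLinearMap₂' R]
    _ ≤ (∑ u, ∑ v, 2 * ((if G.Adj u v then x u ^ 2 else 0) +
          (if G.Adj u v then x v ^ 2 else 0))) / 2 := by
        gcongr with u _ v _
        exact edge_le u v
    _ = 2 * (x ⬝ᵥ G.degMatrix R *ᵥ x) := by
        simp only [← Finset.mul_sum, Finset.sum_add_distrib, sum_left, sum_right]
        ring

end Energy

section Pseudoinverse

variable {V : Type*} [Fintype V]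

lemma allOnes_mulVec (x : V → ℝ) : allOnes V *ᵥ x = fun _ ↦ ∑ v, x v := by
  ext
  simp [allOnes, mulVec, dotProduct]

variable [DecidableEq V] (G : SimpleGraph V) [DecidableRel G.Adj]

lemma sum_lapMatrix_mulVec {R : Type*} [CommRing R] (x : V → R) :
    ∑ v, (G.lapMatrix R *ᵥ x) v = 0 := by
  rw [← one_dotProduct, dotProduct_mulVec, ← mulVec_transpose, (G.isSymm_lapMatrix R).eq]
  exact (congrArg (· ⬝ᵥ x) G.lapMatrix_mulVec_const_eq_zero).trans (zero_dotProduct x)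

lemma lapMatrix_add_smul_allOnes_mulVec (c : ℝ) {x : V → ℝ} (hx : ∑ v, x v = 0) :
    (G.lapMatrix ℝ + c • allOnes V) *ᵥ x = G.lapMatrix ℝ *ᵥ x := by
  ext v
  simp [add_mulVec, smul_mulVec, allOnes_mulVec, hx]

lemma sum_lapMatrix_add_smul_allOnes_mulVec (c : ℝ) (x : V → ℝ) :
    ∑ v, ((G.lapMatrix ℝ + c • allOnes V) *ᵥ x) v = Fintype.card V * c * ∑ v, x v := by
  simp [add_mulVec, smul_mulVec, allOnes_mulVec, Finset.sum_add_distrib, sum_lapMatrix_mulVec,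
    mul_assoc]

variable {G}

lemma sum_lapMatrix_add_smul_allOnes_mulVec_eq_zero_iff [Nonempty V] {c : ℝ} (hc : c ≠ 0)
    {x : V → ℝ} :
    ∑ v, ((G.lapMatrix ℝ + c • allOnes V) *ᵥ x) v = 0 ↔ ∑ v, x v = 0 := by
  simp [sum_lapMatrix_add_smul_allOnes_mulVec, hc]

lemma eq_zero_of_lapMatrix_mulVec_eq_zero (hG : G.Connected) {x : V → ℝ}
    (hLx : G.lapMatrix ℝ *ᵥ x = 0) (hx : ∑ v, x v = 0) : x = 0 := by
  have := hG.nonempty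
  have const (u v : V) : x u = x v :=
    G.lapMatrix_mulVec_eq_zero_iff_forall_reachable.mp hLx u v (hG.preconnected u v)
  ext v
  simpa [const _ v] using hx

lemma isUnit_lapMatrix_add_smul_allOnes (hG : G.Connected) {c : ℝ} (hc : c ≠ 0) :
    IsUnit (G.lapMatrix ℝ + c • allOnes V) := by
  have := hG.nonempty
  rw [← mulVec_injective_iff_isUnit, ← coe_mulVecLin, ← LinearMap.ker_eq_bot,
    LinearMap.ker_eq_bot']
  intro x hMx
  rw [mulVecLin_apply] at hMx
  have hx : ∑ v, x v = 0 :=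
    (sum_lapMatrix_add_smul_allOnes_mulVec_eq_zero_iff (G := G) hc).mp (by simp [hMx])
  rw [lapMatrix_add_smul_allOnes_mulVec G c hx] at hMx
  exact eq_zero_of_lapMatrix_mulVec_eq_zero hG hMx hx

lemma lapMatrix_mulVec_lapPinv_mulVec (hG : G.Connected) {b : V → ℝ} (hb : ∑ v, b v = 0) :
    G.lapMatrix ℝ *ᵥ (lapPinv G *ᵥ b) = b := by
  have := hG.nonempty
  have hc : (Fintype.card V : ℝ)⁻¹ ≠ 0 := by simp
  have hdet := (isUnit_iff_isUnit_det _).mp (isUnit_lapMatrix_add_smul_allOnes hG hc)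
  set M := G.lapMatrix ℝ + (Fintype.card V : ℝ)⁻¹ • allOnes V with hM
  have pinv_eq : lapPinv G *ᵥ b = M⁻¹ *ᵥ b := by
    ext v
    simp [lapPinv, ← hM, sub_mulVec, smul_mulVec, allOnes_mulVec, hb]
  have solves : M *ᵥ (M⁻¹ *ᵥ b) = b := by
    rw [mulVec_mulVec, mul_nonsing_inv _ hdet, one_mulVec]
  have sum_zero : ∑ v, (M⁻¹ *ᵥ b) v = 0 :=
    (sum_lapMatrix_add_smul_allOnes_mulVec_eq_zero_iff (G := G) hc).mp
      (by rw [← hM, solves, hb])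
  rw [pinv_eq, ← lapMatrix_add_smul_allOnes_mulVec G _ sum_zero, ← hM, solves]

lemma two_mul_dotProduct_sub_le_dotProduct_lapPinv_mulVec (hG : G.Connected) {b : V → ℝ}
    (hb : ∑ v, b v = 0) (x : V → ℝ) :
    2 * (x ⬝ᵥ b) - x ⬝ᵥ G.lapMatrix ℝ *ᵥ x ≤ b ⬝ᵥ lapPinv G *ᵥ b := by
  simpa only [lapMatrix_mulVec_lapPinv_mulVec hG hb, dotProduct_comm _ b] using
    two_mul_dotProduct_mulVec_sub_le (G.posSemidef_lapMatrix ℝ) x (lapPinv G *ᵥ b)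

theorem half_sum_sq_div_degree_le_dotProduct_lapPinv_mulVec (hG : G.Connected) {b : V → ℝ}
    (hb : ∑ v, b v = 0) :
    (1 / 2) * ∑ v, b v ^ 2 / (G.degree v : ℝ) ≤ b ⬝ᵥ lapPinv G *ᵥ b := by
  let x : V → ℝ := fun v ↦ b v / (2 * G.degree v)
  have pairing : x ⬝ᵥ b = (1 / 2) * ∑ v, b v ^ 2 / (G.degree v : ℝ) := by
    rw [dotProduct, Finset.mul_sum]
    refine Finset.sum_congr rfl fun v _ ↦ ?_
    simp only [x]
    ring
  have energy : x ⬝ᵥ G.degMatrix ℝ *ᵥ x = (1 / 4) * ∑ v, b v ^ 2 / (G.degree v : ℝ) := by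
    rw [G.dotProduct_mulVec_degMatrix, Finset.mul_sum]
    refine Finset.sum_congr rfl fun v _ ↦ ?_
    simp only [x]
    field
  linarith [two_mul_dotProduct_sub_le_dotProduct_lapPinv_mulVec hG hb x,
    dotProduct_lapMatrix_mulVec_le_two_mul_degMatrix G x]

end Pseudoinverse

section UnitDemand

variable {V : Type*} [Fintype V] [DecidableEq V]

lemma sum_bvec (s t : V) : ∑ v, bvec s t v = 0 := by
  simp [bvec]

lemma sum_bvec_sq_div {s t : V} (hst : s ≠ t) (w : V → ℝ) :
    ∑ v, bvec s t v ^ 2 / w v = 1 / w s + 1 / w t := by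
  rw [Fintype.sum_eq_add s t hst]
  · simp [bvec, hst, hst.symm]
  · rintro v ⟨hvs, hvt⟩
    simp [bvec, hvs, hvt]

end UnitDemand

/-- For a connected simple graph on `n ≥ 2` vertices and distinct vertices `s, t`
with degrees `d_s, d_t`, the effective resistance
`R_eff(s,t) = b_stᵀ L† b_st` satisfies `R_eff(s,t) ≥ (1/2)(1/d_s + 1/d_t)`. -/
theorem reff_ge_half_inv_degrees {V : Type*} [Fintype V] [DecidableEq V]
    (G : SimpleGraph V) [DecidableRel G.Adj] (hconn : G.Connected)
    (hn : 2 ≤ Fintype.card V) (s t : V) (hst : s ≠ t) :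
    (1 / 2) * (1 / (G.degree s : ℝ) + 1 / (G.degree t : ℝ)) ≤
      bvec s t ⬝ᵥ (lapPinv G *ᵥ bvec s t) := by
  rw [← sum_bvec_sq_div hst fun v ↦ (G.degree v : ℝ)]
  exact half_sum_sq_div_degree_le_dotProduct_lapPinv_mulVec hconn (sum_bvec s t)
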